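/- Existence of the infinite Viterbi path from infinitely many separated nodes: let x_{1:∞} ∈ 𝒳^∞, r ≥ 1, i ∈ 𝒴, and let u₁ < u₂ < ⋯ be a strictly increasing sequence of times such that each u_k is an i-node of order r for x_{1:u_k+r} and u_{k+1} ≥ u_k + r for all k. Then there exists an infinite Viterbi path v_{1:∞} of x_{1:∞}, which moreover satisfies v_{u_k} = i for every k. -/

import Mathlib

open scoped BigOperators

namespace PMMViterbi

variable {𝒳 𝒴 : Type*} [Fintype 𝒴] [Nonempty 𝒴]

/-- Product of transition weights `∏_{k=t+1}^{n} q(x_k, y_k | x_{k-1}, y_{k-1})`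
along the path `y`, for observations `x` (sequences are indexed starting from 1). -/
noncomputable def prodQ (q : 𝒳 × 𝒴 → 𝒳 × 𝒴 → ℝ) (x : ℕ → 𝒳) (y : ℕ → 𝒴) (t n : ℕ) : ℝ :=
  ∏ k ∈ Finset.Ioc t n, q (x k, y k) (x (k - 1), y (k - 1))

/-- `p(x_{1:n}, y_{1:n}) = p₁(x₁,y₁) · ∏_{k=2}^n q(x_k,y_k|x_{k-1},y_{k-1})`. -/
noncomputable def pJoint (q : 𝒳 × 𝒴 → 𝒳 × 𝒴 → ℝ) (p1 : 𝒳 × 𝒴 → ℝ)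
    (x : ℕ → 𝒳) (y : ℕ → 𝒴) (n : ℕ) : ℝ :=
  p1 (x 1, y 1) * prodQ q x y 1 n

/-- `δ_t(i)`: the maximum of `p(x_{1:t}, y_{1:t})` over paths with `y_t = i`. -/
noncomputable def delta (q : 𝒳 × 𝒴 → 𝒳 × 𝒴 → ℝ) (p1 : 𝒳 × 𝒴 → ℝ)
    (x : ℕ → 𝒳) (t : ℕ) (i : 𝒴) : ℝ :=
  ⨆ (y : ℕ → 𝒴) (_ : y t = i), pJoint q p1 x y t

/-- `p_{ij}(x_{t:n})`: the maximum of `∏_{k=t+1}^n q(x_k,y_k|x_{k-1},y_{k-1})`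
over paths with `y_t = i` and `y_n = j`. -/
noncomputable def pTrans (q : 𝒳 × 𝒴 → 𝒳 × 𝒴 → ℝ) (x : ℕ → 𝒳) (t n : ℕ) (i j : 𝒴) : ℝ :=
  ⨆ (y : ℕ → 𝒴) (_ : y t = i ∧ y n = j), prodQ q x y t n

/-- Time `t` is an `i`-node of order `m - t` for `x_{1:m}`. -/
def IsNode (q : 𝒳 × 𝒴 → 𝒳 × 𝒴 → ℝ) (p1 : 𝒳 × 𝒴 → ℝ)
    (x : ℕ → 𝒳) (t m : ℕ) (i : 𝒴) : Prop :=
  ∀ j k : 𝒴, delta q p1 x t k * pTrans q x t m k j ≤ delta q p1 x t i * pTrans q x t m i j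

/-- Time `t` is a strong `i`-node of order `m - t` for `x_{1:m}`. -/
def IsStrongNode (q : 𝒳 × 𝒴 → 𝒳 × 𝒴 → ℝ) (p1 : 𝒳 × 𝒴 → ℝ)
    (x : ℕ → 𝒳) (t m : ℕ) (i : 𝒴) : Prop :=
  IsNode q p1 x t m i ∧
    ∀ j k : 𝒴, k ≠ i → 0 < delta q p1 x t i * pTrans q x t m i j →
      delta q p1 x t k * pTrans q x t m k j < delta q p1 x t i * pTrans q x t m i j

/-- `v` is a Viterbi path of `x_{1:n}`: it maximizes `y ↦ p(x_{1:n}, y_{1:n})`. -/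
def IsViterbi (q : 𝒳 × 𝒴 → 𝒳 × 𝒴 → ℝ) (p1 : 𝒳 × 𝒴 → ℝ)
    (x : ℕ → 𝒳) (n : ℕ) (v : ℕ → 𝒴) : Prop :=
  ∀ y : ℕ → 𝒴, pJoint q p1 x y n ≤ pJoint q p1 x v n

/-- `v` is an infinite Viterbi path of `x_{1:∞}`: for every `t ≥ 1` there is `m ≥ t`
such that for every `n ≥ m` some Viterbi path of `x_{1:n}` agrees with `v`
on coordinates `1, …, t`. -/
def IsInfViterbi (q : 𝒳 × 𝒴 → 𝒳 × 𝒴 → ℝ) (p1 : 𝒳 × 𝒴 → ℝ)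
    (x : ℕ → 𝒳) (v : ℕ → 𝒴) : Prop :=
  ∀ t : ℕ, 1 ≤ t → ∃ m : ℕ, t ≤ m ∧ ∀ n : ℕ, m ≤ n →
    ∃ w : ℕ → 𝒴, IsViterbi q p1 x n w ∧ ∀ s : ℕ, 1 ≤ s → s ≤ t → w s = v s

lemma exists_max_of_depends (f : (ℕ → 𝒴) → ℝ) (N : ℕ)
    (hf : ∀ y y' : ℕ → 𝒴, (∀ s ≤ N, y s = y' s) → f y = f y')
    (P : (ℕ → 𝒴) → Prop) (hP : ∃ y, P y) :
    ∃ y, P y ∧ ∀ y', P y' → f y' ≤ f y := by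
  have hfin : (Set.range f).Finite := by
    have : Set.range f ⊆ Set.range (fun g : Fin (N + 1) → 𝒴 =>
        f (fun s => g (Fin.ofNat (N + 1) s))) := by
      rintro _ ⟨y, rfl⟩
      refine ⟨fun j => y j, ?_⟩
      apply hf
      intro s hs
      simp [Nat.mod_eq_of_lt (Nat.lt_succ_of_le hs)]
    exact (Set.finite_range _).subset this
  have hfin2 : (f '' {y | P y}).Finite := hfin.subset (Set.image_subset_range _ _)
  obtain ⟨y0, hy0⟩ := hP
  obtain ⟨_, ⟨y, hy, rfl⟩, hmax⟩ :=
    Set.exists_max_image (f '' {y | P y}) id hfin2 ⟨_, y0, hy0, rfl⟩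
  exact ⟨y, hy, fun y' hy' => hmax _ ⟨y', hy', rfl⟩⟩

lemma iSup_eq_of_max (f : (ℕ → 𝒴) → ℝ) (P : (ℕ → 𝒴) → Prop) (h0 : ∀ y, 0 ≤ f y)
    (y : ℕ → 𝒴) (hy : P y) (hmax : ∀ y', P y' → f y' ≤ f y) :
    (⨆ (y : ℕ → 𝒴) (_ : P y), f y) = f y := by
  have hle : ∀ y', (⨆ (_ : P y'), f y') ≤ f y := by
    intro y'
    by_cases h : P y'
    · simpa [h] using hmax y' h
    · simpa [h] using h0 y
  apply le_antisymm (ciSup_le hle)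
  have := le_ciSup (f := fun y' => ⨆ (_ : P y'), f y') ⟨f y, by rintro _ ⟨y', rfl⟩; exact hle y'⟩ y
  simpa [hy] using this

lemma prodQ_congr (q : 𝒳 × 𝒴 → 𝒳 × 𝒴 → ℝ) (x : ℕ → 𝒳) (y y' : ℕ → 𝒴) (t n : ℕ)
    (h : ∀ s, t ≤ s → s ≤ n → y s = y' s) : prodQ q x y t n = prodQ q x y' t n := by
  unfold prodQ
  apply Finset.prod_congr rfl
  intro k hk
  rw [Finset.mem_Ioc] at hk
  rw [h k (by omega) (by omega), h (k - 1) (by omega) (by omega)]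

lemma pJoint_congr (q : 𝒳 × 𝒴 → 𝒳 × 𝒴 → ℝ) (p1 : 𝒳 × 𝒴 → ℝ) (x : ℕ → 𝒳)
    (y y' : ℕ → 𝒴) (n : ℕ) (hn : 1 ≤ n)
    (h : ∀ s, 1 ≤ s → s ≤ n → y s = y' s) : pJoint q p1 x y n = pJoint q p1 x y' n := by
  unfold pJoint
  rw [prodQ_congr q x y y' 1 n h, h 1 le_rfl hn]

lemma prodQ_mul (q : 𝒳 × 𝒴 → 𝒳 × 𝒴 → ℝ) (x : ℕ → 𝒳) (y : ℕ → 𝒴) (t m n : ℕ)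
    (h1 : t ≤ m) (h2 : m ≤ n) : prodQ q x y t n = prodQ q x y t m * prodQ q x y m n := by
  unfold prodQ
  exact (Finset.prod_Ioc_consecutive _ h1 h2).symm

lemma pJoint_mul (q : 𝒳 × 𝒴 → 𝒳 × 𝒴 → ℝ) (p1 : 𝒳 × 𝒴 → ℝ) (x : ℕ → 𝒳) (y : ℕ → 𝒴)
    (m n : ℕ) (h1 : 1 ≤ m) (h2 : m ≤ n) :
    pJoint q p1 x y n = pJoint q p1 x y m * prodQ q x y m n := by
  unfold pJoint
  rw [prodQ_mul q x y 1 m n h1 h2, mul_assoc]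

lemma prodQ_nonneg (q : 𝒳 × 𝒴 → 𝒳 × 𝒴 → ℝ) (hq : ∀ z z' : 𝒳 × 𝒴, 0 ≤ q z z')
    (x : ℕ → 𝒳) (y : ℕ → 𝒴) (t n : ℕ) : 0 ≤ prodQ q x y t n :=
  Finset.prod_nonneg fun _ _ => hq _ _

lemma pJoint_nonneg (q : 𝒳 × 𝒴 → 𝒳 × 𝒴 → ℝ) (p1 : 𝒳 × 𝒴 → ℝ)
    (hq : ∀ z z' : 𝒳 × 𝒴, 0 ≤ q z z') (hp1 : ∀ z : 𝒳 × 𝒴, 0 ≤ p1 z)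
    (x : ℕ → 𝒳) (y : ℕ → 𝒴) (n : ℕ) : 0 ≤ pJoint q p1 x y n :=
  mul_nonneg (hp1 _) (prodQ_nonneg q hq x y 1 n)

/-- Follow `a` up to time `t`, then `b`. -/
def splice (t : ℕ) (a b : ℕ → 𝒴) : ℕ → 𝒴 := fun s => if s ≤ t then a s else b s

lemma splice_le (t : ℕ) (a b : ℕ → 𝒴) (s : ℕ) (h : s ≤ t) : splice t a b s = a s := by
  simp [splice, h]

lemma splice_ge (t : ℕ) (a b : ℕ → 𝒴) (hab : a t = b t) (s : ℕ) (h : t ≤ s) :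
    splice t a b s = b s := by
  rcases h.eq_or_lt with rfl | h
  · simp [splice, hab]
  · simp [splice, Nat.not_le.mpr h]

lemma pJoint_splice (q : 𝒳 × 𝒴 → 𝒳 × 𝒴 → ℝ) (p1 : 𝒳 × 𝒴 → ℝ) (x : ℕ → 𝒳)
    (a b : ℕ → 𝒴) (t n : ℕ) (hab : a t = b t) (ht : 1 ≤ t) (hn : t ≤ n) :
    pJoint q p1 x (splice t a b) n = pJoint q p1 x a t * prodQ q x b t n := by
  rw [pJoint_mul q p1 x _ t n ht hn,
    pJoint_congr q p1 x (splice t a b) a t ht (fun s _ h => splice_le t a b s h),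
    prodQ_congr q x (splice t a b) b t n (fun s h _ => splice_ge t a b hab s h)]

lemma exists_pJoint_max (q : 𝒳 × 𝒴 → 𝒳 × 𝒴 → ℝ) (p1 : 𝒳 × 𝒴 → ℝ) (x : ℕ → 𝒳)
    (t : ℕ) (ht : 1 ≤ t) (P : (ℕ → 𝒴) → Prop) (hP : ∃ y, P y) :
    ∃ y, P y ∧ ∀ y', P y' → pJoint q p1 x y' t ≤ pJoint q p1 x y t :=
  exists_max_of_depends _ t
    (fun y y' h => pJoint_congr q p1 x y y' t ht (fun s _ hs => h s hs)) P hP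

lemma exists_prodQ_max (q : 𝒳 × 𝒴 → 𝒳 × 𝒴 → ℝ) (x : ℕ → 𝒳)
    (t n : ℕ) (P : (ℕ → 𝒴) → Prop) (hP : ∃ y, P y) :
    ∃ y, P y ∧ ∀ y', P y' → prodQ q x y' t n ≤ prodQ q x y t n :=
  exists_max_of_depends _ n
    (fun y y' h => prodQ_congr q x y y' t n (fun s _ hs => h s hs)) P hP

lemma delta_spec (q : 𝒳 × 𝒴 → 𝒳 × 𝒴 → ℝ) (p1 : 𝒳 × 𝒴 → ℝ)
    (hq : ∀ z z' : 𝒳 × 𝒴, 0 ≤ q z z') (hp1 : ∀ z : 𝒳 × 𝒴, 0 ≤ p1 z)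
    (x : ℕ → 𝒳) (t : ℕ) (ht : 1 ≤ t) (i : 𝒴) :
    ∃ y : ℕ → 𝒴, y t = i ∧ delta q p1 x t i = pJoint q p1 x y t ∧
      ∀ y' : ℕ → 𝒴, y' t = i → pJoint q p1 x y' t ≤ pJoint q p1 x y t := by
  obtain ⟨y, hy, hm⟩ := exists_pJoint_max q p1 x t ht (fun y => y t = i) ⟨fun _ => i, rfl⟩
  exact ⟨y, hy, iSup_eq_of_max (fun y => pJoint q p1 x y t) (fun y => y t = i)
    (fun y => pJoint_nonneg q p1 hq hp1 x y t) y hy hm, hm⟩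

lemma pTrans_spec (q : 𝒳 × 𝒴 → 𝒳 × 𝒴 → ℝ)
    (hq : ∀ z z' : 𝒳 × 𝒴, 0 ≤ q z z')
    (x : ℕ → 𝒳) (t n : ℕ) (ht : t < n) (i j : 𝒴) :
    ∃ y : ℕ → 𝒴, (y t = i ∧ y n = j) ∧ pTrans q x t n i j = prodQ q x y t n ∧
      ∀ y' : ℕ → 𝒴, (y' t = i ∧ y' n = j) → prodQ q x y' t n ≤ prodQ q x y t n := by
  obtain ⟨y, hy, hm⟩ := exists_prodQ_max q x t n (fun y => y t = i ∧ y n = j)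
    ⟨fun s => if s ≤ t then i else j, by simp, by simp [ht]⟩
  exact ⟨y, hy, iSup_eq_of_max (fun y => prodQ q x y t n) (fun y => y t = i ∧ y n = j)
    (fun y => prodQ_nonneg q hq x y t n) y hy hm, hm⟩

lemma node_replace (q : 𝒳 × 𝒴 → 𝒳 × 𝒴 → ℝ) (p1 : 𝒳 × 𝒴 → ℝ)
    (hq : ∀ z z' : 𝒳 × 𝒴, 0 ≤ q z z') (hp1 : ∀ z : 𝒳 × 𝒴, 0 ≤ p1 z)
    (x : ℕ → 𝒳) (t m n : ℕ) (ht : 1 ≤ t) (htm : t < m) (hmn : m ≤ n) (i : 𝒴)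
    (hnode : IsNode q p1 x t m i) (y : ℕ → 𝒴) :
    ∃ y' : ℕ → 𝒴, y' t = i ∧ (∀ s, m ≤ s → y' s = y s) ∧
      pJoint q p1 x y n ≤ pJoint q p1 x y' n := by
  obtain ⟨a, hat, had, -⟩ := delta_spec q p1 hq hp1 x t ht i
  obtain ⟨b, ⟨hbt, hbm⟩, hbd, -⟩ := pTrans_spec q hq x t m htm i (y m)
  obtain ⟨c, hct, hcd, hcm⟩ := delta_spec q p1 hq hp1 x t ht (y t)
  obtain ⟨d, -, hdd, hdm⟩ := pTrans_spec q hq x t m htm (y t) (y m)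
  have hN := hnode (y m) (y t)
  rw [had, hbd, hcd, hdd] at hN
  have hab : a t = b t := by rw [hat, hbt]
  have hm' : splice t a b m = y m := by rw [splice_ge t a b hab m htm.le, hbm]
  refine ⟨splice m (splice t a b) y, ?_, fun s hs => splice_ge m _ _ hm' s hs, ?_⟩
  · rw [splice_le _ _ _ _ htm.le, splice_le _ _ _ _ le_rfl, hat]
  · rw [pJoint_splice q p1 x _ y m n hm' (by omega) hmn,
      pJoint_splice q p1 x a b t m hab ht htm.le,
      pJoint_mul q p1 x y m n (by omega) hmn, pJoint_mul q p1 x y t m ht htm.le]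
    refine mul_le_mul_of_nonneg_right ?_ (prodQ_nonneg q hq x y m n)
    refine le_trans (mul_le_mul (hcm y rfl) (hdm y ⟨rfl, rfl⟩) (prodQ_nonneg q hq x y t m)
      (pJoint_nonneg q p1 hq hp1 x c t)) hN

/-- existence of the infinite Viterbi path from infinitely many separated
nodes. If `u₁ < u₂ < ⋯` (with `u_{k+1} ≥ u_k + r`) is a sequence of `i`-nodes of order
`r ≥ 1`, then `x_{1:∞}` has an infinite Viterbi path `v` with `v_{u_k} = i` for all `k`. -/
theorem exists_infinite_viterbi (q : 𝒳 × 𝒴 → 𝒳 × 𝒴 → ℝ) (p1 : 𝒳 × 𝒴 → ℝ)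
    (hq : ∀ z z' : 𝒳 × 𝒴, 0 ≤ q z z') (hp1 : ∀ z : 𝒳 × 𝒴, 0 ≤ p1 z)
    (x : ℕ → 𝒳) (r : ℕ) (hr : 1 ≤ r) (i : 𝒴) (u : ℕ → ℕ)
    (hu1 : 1 ≤ u 1)
    (hstrict : ∀ k : ℕ, 1 ≤ k → u k < u (k + 1))
    (hsep : ∀ k : ℕ, 1 ≤ k → u k + r ≤ u (k + 1))
    (hnode : ∀ k : ℕ, 1 ≤ k → IsNode q p1 x (u k) (u k + r) i) :
    ∃ v : ℕ → 𝒴, IsInfViterbi q p1 x v ∧ ∀ k : ℕ, 1 ≤ k → v (u k) = i := by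
  have hu : ∀ k, 1 ≤ k → k ≤ u k := by
    intro k hk
    induction k, hk using Nat.le_induction with
    | base => exact hu1
    | succ k hk ih => have := hstrict k hk; omega
  let Good : ℕ → (ℕ → 𝒴) → Prop := fun k V => V (u k) = i ∧
    ∀ y : ℕ → 𝒴, y (u k) = i → pJoint q p1 x y (u k) ≤ pJoint q p1 x V (u k)
  have step : ∀ k V, ∃ V', 1 ≤ k → Good k V →
      Good (k + 1) V' ∧ ∀ s, s ≤ u k → V' s = V s := by
    intro k V
    by_cases hk : 1 ≤ k
    swap
    · exact ⟨V, fun h => absurd h hk⟩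
    by_cases hG : Good k V
    swap
    · exact ⟨V, fun _ h => absurd h hG⟩
    have huk : 1 ≤ u k := hk.trans (hu k hk)
    have hlt := hstrict k hk
    obtain ⟨b, ⟨hb1, hb2⟩, -, hbm⟩ := pTrans_spec q hq x (u k) (u (k + 1)) hlt i i
    have hab : V (u k) = b (u k) := by rw [hG.1, hb1]
    refine ⟨splice (u k) V b, fun _ _ => ⟨⟨?_, ?_⟩, fun s hs => splice_le _ _ _ s hs⟩⟩
    · rw [splice_ge _ _ _ hab _ hlt.le, hb2]
    · intro y hy
      obtain ⟨y', h1, h2, h3⟩ := node_replace q p1 hq hp1 x (u k) (u k + r) (u (k + 1)) huk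
        (by omega) (hsep k hk) i (hnode k hk) y
      refine h3.trans ?_
      rw [pJoint_splice q p1 x V b _ _ hab huk hlt.le, pJoint_mul q p1 x y' _ _ huk hlt.le]
      exact mul_le_mul (hG.2 y' h1) (hbm y' ⟨h1, by rw [h2 _ (hsep k hk), hy]⟩)
        (prodQ_nonneg q hq x _ _ _) (pJoint_nonneg q p1 hq hp1 x _ _)
  choose F hF using step
  obtain ⟨a, ha1, -, ha2⟩ := delta_spec q p1 hq hp1 x (u 1) hu1 i
  let V : ℕ → ℕ → 𝒴 := fun k => Nat.rec a (fun j W => F (j + 1) W) k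
  have hV : ∀ j, V (j + 1) = F (j + 1) (V j) := fun j => rfl
  have hgood : ∀ j, Good (j + 1) (V j) := by
    intro j
    induction j with
    | zero => exact ⟨ha1, ha2⟩
    | succ j ih => rw [hV]; exact (hF (j + 1) (V j) (by omega) ih).1
  have hmono : ∀ j l, j ≤ l → u (j + 1) ≤ u (l + 1) := by
    intro j l hjl
    induction l, hjl using Nat.le_induction with
    | base => exact le_rfl
    | succ l _ ih => have := hstrict (l + 1) (by omega); omega
  have hagree : ∀ j l, j ≤ l → ∀ s, s ≤ u (j + 1) → V l s = V j s := by
    intro j l hjl s hs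
    induction l, hjl using Nat.le_induction with
    | base => rfl
    | succ l hl ih =>
      rw [hV, (hF (l + 1) (V l) (by omega) (hgood l)).2 s (hs.trans (hmono j l hl)), ih]
  have hv : ∀ j s, s ≤ u (j + 1) → V s s = V j s := by
    intro j s hs
    rcases le_total j s with h | h
    · exact hagree j s h s hs
    · exact (hagree s j h s (by have := hu (s + 1) (by omega); omega)).symm
  refine ⟨fun s => V s s, ?_, ?_⟩
  · intro t ht
    have htu : t ≤ u (t + 1) := by have := hu (t + 1) (by omega); omega
    have h1u : 1 ≤ u (t + 1) := ht.trans htu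
    refine ⟨u (t + 1) + r, by omega, fun n hn => ?_⟩
    obtain ⟨w, -, hw⟩ := exists_pJoint_max q p1 x n (by omega) (fun _ : ℕ → 𝒴 => True)
      ⟨fun _ => i, trivial⟩
    obtain ⟨w', h1, h2, h3⟩ := node_replace q p1 hq hp1 x (u (t + 1)) (u (t + 1) + r) n h1u
        (by omega) hn i (hnode (t + 1) (by omega)) w
    have hab : V t (u (t + 1)) = w' (u (t + 1)) := by rw [(hgood t).1, h1]
    refine ⟨splice (u (t + 1)) (V t) w', ?_, ?_⟩
    · intro y
      refine (hw y trivial).trans (h3.trans ?_)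
      rw [pJoint_splice q p1 x _ _ _ _ hab h1u (by omega),
        pJoint_mul q p1 x w' _ n h1u (by omega)]
      exact mul_le_mul_of_nonneg_right ((hgood t).2 w' h1) (prodQ_nonneg q hq x _ _ _)
    · intro s _ hs
      rw [splice_le _ _ _ _ (hs.trans htu)]
      exact (hv t s (hs.trans htu)).symm
  · intro k hk
    obtain ⟨j, rfl⟩ : ∃ j, k = j + 1 := ⟨k - 1, by omega⟩
    show V (u (j + 1)) (u (j + 1)) = i
    rw [hv j _ le_rfl, (hgood j).1]

end PMMViterbi
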